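/- arXiv:1411.7763 — 3 statements merged into one kernel-verified Lean document; each statement's English description precedes it below -/
import Mathlib

section
/- For every integer b ≥ 0 and every (r,s,t,u) ∈ S_{b,0} (i.e., r,s,t,u ∈ ℤ_{≥0} with u ≥ t, 2r ≥ s, 2t − s − u ≥ −b and s − r − t ≥ 0), the coefficient C^{b,0}_{r,s,t,u} admits the closed product form C^{b,0}_{r,s,t,u} = [(q²)_b / ((q²)_u·(q²)_{b+2t−s−u}·(q²)_{2r−s})] · [(q⁴)_u / ((q⁴)_t·(q⁴)_{u−t}·(q⁴)_{s−r−t})]. -/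
noncomputable section

/-- The field `K = ℚ(q)` of rational functions in `q` over `ℚ`. -/
abbrev K : Type := RatFunc ℚ

/-- The variable `q ∈ K = ℚ(q)`. -/
def q : K := RatFunc.X

open Finset in
/-- The q-Pochhammer symbol `(a;p)_n = ∏_{j<n} (1 − a·p^j)`. -/
def poch (a p : K) (n : ℕ) : K := ∏ j ∈ range n, (1 - a * p ^ j)

/-- `(q²)_n = (q²;q²)_n`. -/
def q2p (n : ℕ) : K := poch (q ^ 2) (q ^ 2) n

/-- `(q⁴)_n = (q⁴;q⁴)_n`. -/
def q4p (n : ℕ) : K := poch (q ^ 4) (q ^ 4) n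

/-- `Ξ_{α,β,γ}` (depending also on `b,c,r,s,t,u`). -/
def Xi (b c r s t u a β γ : ℕ) : K :=
  q2p (b + t - (s + a)) * q2p (2 * r + β - s) * q4p (c + s - (r + β)) * q4p (c + γ)
  / (q2p a * q2p β * q2p γ * q2p (u - (t + a)) * q2p (t - β)
     * q2p (b + β - (s + a)) * q2p (s - (β + γ)) * q4p (c + γ - r))

/-- `φ_C(α,β,γ) = α(α+1+2t) + β(β−1−2α+2b−4r) + γ(γ−1−4r)`. -/
def phiC (b r t a β γ : ℕ) : ℤ :=
  (a : ℤ) * ((a : ℤ) + 1 + 2 * t) + (β : ℤ) * ((β : ℤ) - 1 - 2 * a + 2 * b - 4 * r)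
    + (γ : ℤ) * ((γ : ℤ) - 1 - 4 * r)

open Finset in
/-- The inner sum in `C^{b,c}_{r,s,t,u}`, over `(α,β,γ) ∈ ℤ_{≥0}³` with
`α ≤ u−t`, `β ≤ t`, `α−β ≤ b−s`, `β+γ ≤ s`, `γ ≥ r−c`. -/
def Csum (b c r s t u : ℕ) : K :=
  ∑ p ∈ ((range (u - t + 1)) ×ˢ (range (t + 1)) ×ˢ (range (s + 1))).filter
      (fun p => p.1 + t ≤ u ∧ p.2.1 ≤ t ∧ p.1 + s ≤ p.2.1 + b ∧
        p.2.1 + p.2.2 ≤ s ∧ r ≤ p.2.2 + c),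
    (-1 : K) ^ (p.2.1 + p.2.2) * q ^ phiC b r t p.1 p.2.1 p.2.2
      * Xi b c r s t u p.1 p.2.1 p.2.2

/-- The coefficient `C^{b,c}_{r,s,t,u}`. -/
def Cbc (b c r s t u : ℕ) : K :=
  (q2p b * q2p (u - t)
      / (q2p (b + 2 * t - (s + u)) * q2p (2 * r - s) * q4p r * q4p (u - t)
         * q4p (c + s - (r + t))))
    * ((-1 : K) ^ s * q ^ ((s : ℤ) * (4 * (r : ℤ) - (s : ℤ) + 1)) * Csum b c r s t u)

/-!
Write `p = q²` and `(x - y)ₙ = ∏_{j < n} (x - y pʲ)`. Everything rests on the `p`-binomial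
convolution `(x - y)ₙ / (p)ₙ = ∑_{i + j = n} (x - c)ᵢ / (p)ᵢ * (c - y)ⱼ / (p)ⱼ`, which follows by
induction from `1 - p ^ (i + j) = (1 - p ^ i) + p ^ i * (1 - p ^ j)`. For `c = 0` it is the
`q`-binomial theorem, for `x = 0`, `c = p ^ m`, `y = 1` it is the Durfee rectangle identity, and for
`x = 1`, `c = -p ^ (n + d + 1)`, `y = p ^ (d + 1)` it is a `q`-Chu-Vandermonde sum.

When the triple sum for `C^{b,0}` is reindexed by `γ = r + j`, `N = s - r - β = i + j`, `r = N + d`,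
`t = β + l`, `u - t = α + α'` and `b + β = s + α + A`, all exponents of `q` become even natural
numbers and, up to the factors absorbed along the way, the sum over `γ` is the `q`-Chu-Vandermonde
sum, the sum over `β` the Durfee rectangle sum, and the sum over `α` the `q`-binomial sum.
-/

open Finset

/-- The `p`-analogue `(x - y)(x - y p)⋯(x - y pⁿ⁻¹)` of the power `(x - y) ^ n`: the homogeneous
form of the Pochhammer symbol, which is `(a; p)_n = qSubPow p 1 a n`. -/
def qSubPow {R : Type*} [CommRing R] (p x y : R) (n : ℕ) : R := ∏ j ∈ range n, (x - y * p ^ j)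

local notation "⦅" a ";" p "⦆_" n:max => qSubPow p 1 a n

theorem choose_two_add (m n : ℕ) : (m + n).choose 2 = m.choose 2 + n.choose 2 + m * n := by
  induction n with
  | zero => simp
  | succ n ih =>
    rw [← add_assoc, Nat.choose_succ_succ' (m + n), Nat.choose_succ_succ' n, ih]
    simp only [Nat.choose_one_right]
    ring

section CommRing

variable {R : Type*} [CommRing R] (p x y : R)

@[simp]
theorem qSubPow_zero : qSubPow p x y 0 = 1 := prod_range_zero _

theorem qSubPow_succ (n : ℕ) : qSubPow p x y (n + 1) = qSubPow p x y n * (x - y * p ^ n) :=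
  prod_range_succ _ n

theorem qSubPow_add (m n : ℕ) :
    qSubPow p x y (m + n) = qSubPow p x y m * qSubPow p x (y * p ^ m) n := by
  simp only [qSubPow, prod_range_add, mul_assoc, ← pow_add]

theorem qSubPow_zero_right (n : ℕ) : qSubPow p x 0 n = x ^ n := by
  simp [qSubPow]

theorem qSubPow_mul_mul (a : R) (n : ℕ) :
    qSubPow p (a * x) (a * y) n = a ^ n * qSubPow p x y n := by
  simp only [qSubPow, mul_assoc, ← mul_sub, prod_mul_distrib, prod_const, card_range]

theorem qSubPow_sq (n : ℕ) :
    qSubPow (p ^ 2) (x ^ 2) (y ^ 2) n = qSubPow p x y n * qSubPow p x (-y) n := by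
  simp only [qSubPow, ← prod_mul_distrib]
  exact prod_congr rfl fun j _ => by ring

theorem qSubPow_mul_pow (n : ℕ) :
    qSubPow p (x * p ^ n) y n = (-1) ^ n * p ^ n.choose 2 * qSubPow p y (x * p) n := by
  have hprod : p ^ n.choose 2 = ∏ j ∈ range n, p ^ j := by
    rw [prod_pow_eq_pow_sum, sum_range_id, Nat.choose_two_right]
  have hreflect : qSubPow p y (x * p) n = ∏ j ∈ range n, (y - x * p * p ^ (n - 1 - j)) :=
    (prod_range_reflect _ n).symm
  have hsign : (-1 : R) ^ n = ∏ _j ∈ range n, -1 := by rw [prod_const, card_range]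
  rw [hsign, hprod, hreflect, ← prod_mul_distrib, ← prod_mul_distrib, qSubPow]
  refine prod_congr rfl fun j hj => ?_
  have hpow : p ^ n = p * p ^ (n - 1 - j) * p ^ j := by
    rw [← pow_succ', ← pow_add]
    congr 1
    have := mem_range.mp hj
    omega
  linear_combination x * hpow

theorem qSubPow_zero_left (n : ℕ) : qSubPow p 0 y n = (-y) ^ n * p ^ n.choose 2 := by
  have h := qSubPow_mul_pow p 0 y n
  rw [zero_mul, zero_mul, qSubPow_zero_right] at h
  rw [h, neg_pow y]
  ring

theorem qSubPow_pow_one_eq_zero {m n : ℕ} (h : m < n) : qSubPow p (p ^ m) 1 n = 0 :=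
  prod_eq_zero (mem_range.mpr h) (by simp)

theorem qSubPow_pow_add_one_mul (m n : ℕ) :
    qSubPow p (p ^ (m + n)) 1 n * ⦅p; p⦆_m = (-1) ^ n * p ^ n.choose 2 * ⦅p; p⦆_(m + n) := by
  rw [pow_add, qSubPow_mul_pow, qSubPow_add, mul_comm p (p ^ m)]
  ring

end CommRing

section Field

variable {F : Type*} [Field F] {p : F}

theorem one_sub_pow_succ_ne_zero (hp : ¬IsOfFinOrder p) (n : ℕ) : 1 - p ^ (n + 1) ≠ 0 := fun h =>
  hp (isOfFinOrder_iff_pow_eq_one.mpr ⟨n + 1, n.succ_pos, (sub_eq_zero.mp h).symm⟩)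

theorem qSubPow_one_self_ne_zero (hp : ¬IsOfFinOrder p) (n : ℕ) : ⦅p; p⦆_n ≠ 0 :=
  prod_ne_zero_iff.mpr fun j _ => pow_succ' p j ▸ one_sub_pow_succ_ne_zero hp j

theorem qSubPow_one_sq_ne_zero (hp : ¬IsOfFinOrder p) (n : ℕ) : ⦅p ^ 2; p ^ 2⦆_n ≠ 0 :=
  qSubPow_one_self_ne_zero (fun h => hp (h.of_pow two_ne_zero)) n

theorem qSubPow_one_neg_ne_zero (hp : ¬IsOfFinOrder p) (n : ℕ) : ⦅-p; p⦆_n ≠ 0 := by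
  have h := qSubPow_one_sq_ne_zero hp n
  rw [← one_pow 2, qSubPow_sq] at h
  exact right_ne_zero_of_mul h

theorem one_sub_pow_succ_mul_qSubPow_div (hp : ¬IsOfFinOrder p) (x y : F) (n : ℕ) :
    (1 - p ^ (n + 1)) * (qSubPow p x y (n + 1) / ⦅p; p⦆_(n + 1))
      = (x - y * p ^ n) * (qSubPow p x y n / ⦅p; p⦆_n) := by
  have := qSubPow_one_self_ne_zero hp n
  have := one_sub_pow_succ_ne_zero hp n
  rw [qSubPow_succ, qSubPow_succ, ← pow_succ']
  field_simp

theorem qSubPow_div_eq_sum_antidiagonal (hp : ¬IsOfFinOrder p) (x c y : F) (n : ℕ) :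
    qSubPow p x y n / ⦅p; p⦆_n = ∑ ij ∈ antidiagonal n,
      qSubPow p x c ij.1 / ⦅p; p⦆_ij.1 * (qSubPow p c y ij.2 / ⦅p; p⦆_ij.2) := by
  induction n with
  | zero => simp
  | succ n ih =>
    refine mul_left_cancel₀ (one_sub_pow_succ_ne_zero hp n) ?_
    rw [one_sub_pow_succ_mul_qSubPow_div hp, ih]
    set f : ℕ → F := fun i => qSubPow p x c i / ⦅p; p⦆_i
    set g : ℕ → F := fun j => qSubPow p c y j / ⦅p; p⦆_j
    have hf : ∀ i, (1 - p ^ (i + 1)) * f (i + 1) = (x - c * p ^ i) * f i :=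
      one_sub_pow_succ_mul_qSubPow_div hp x c
    have hg : ∀ j, (1 - p ^ (j + 1)) * g (j + 1) = (c - y * p ^ j) * g j :=
      one_sub_pow_succ_mul_qSubPow_div hp c y
    have hsplit : ∀ ij ∈ antidiagonal (n + 1), (1 - p ^ (n + 1)) * (f ij.1 * g ij.2)
        = (1 - p ^ ij.1) * f ij.1 * g ij.2 + p ^ ij.1 * f ij.1 * ((1 - p ^ ij.2) * g ij.2) := by
      intro ij hij
      rw [← mem_antidiagonal.mp hij]
      ring
    symm
    calc (1 - p ^ (n + 1)) * ∑ ij ∈ antidiagonal (n + 1), f ij.1 * g ij.2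
        = ∑ ij ∈ antidiagonal (n + 1), (1 - p ^ ij.1) * f ij.1 * g ij.2
          + ∑ ij ∈ antidiagonal (n + 1), p ^ ij.1 * f ij.1 * ((1 - p ^ ij.2) * g ij.2) := by
            rw [mul_sum, sum_congr rfl hsplit, sum_add_distrib]
      _ = ∑ ij ∈ antidiagonal n, (x - c * p ^ ij.1) * f ij.1 * g ij.2
          + ∑ ij ∈ antidiagonal n, p ^ ij.1 * f ij.1 * ((c - y * p ^ ij.2) * g ij.2) := by
            rw [Nat.sum_antidiagonal_succ, Nat.sum_antidiagonal_succ']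
            simp [hf, hg]
      _ = (x - y * p ^ n) * ∑ ij ∈ antidiagonal n, f ij.1 * g ij.2 := by
            rw [mul_sum, ← sum_add_distrib]
            refine sum_congr rfl fun ij hij => ?_
            rw [← mem_antidiagonal.mp hij]
            ring

theorem sum_antidiagonal_qBinomial (hp : ¬IsOfFinOrder p) (x : F) (n : ℕ) :
    ∑ ij ∈ antidiagonal n, x ^ ij.1 * p ^ ij.1.choose 2 / (⦅p; p⦆_ij.1 * ⦅p; p⦆_ij.2)
      = ⦅-x; p⦆_n / ⦅p; p⦆_n := by
  rw [qSubPow_div_eq_sum_antidiagonal hp 1 0, ← Nat.sum_antidiagonal_swap]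
  refine sum_congr rfl fun ij _ => ?_
  rw [Prod.fst_swap, Prod.snd_swap, qSubPow_zero_right, qSubPow_zero_left, one_pow, neg_neg,
    div_mul_div_comm, one_mul, mul_comm (⦅p; p⦆_ij.2)]

theorem sum_antidiagonal_durfee (hp0 : p ≠ 0) (hp : ¬IsOfFinOrder p) (m n : ℕ) :
    ∑ ij ∈ antidiagonal n, (if ij.2 ≤ m then
        p ^ (ij.1 * (m - ij.2)) / (⦅p; p⦆_ij.1 * ⦅p; p⦆_ij.2 * ⦅p; p⦆_(m - ij.2)) else 0)
      = 1 / (⦅p; p⦆_m * ⦅p; p⦆_n) := by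
  have hne := qSubPow_one_self_ne_zero hp
  have hvandermonde := qSubPow_div_eq_sum_antidiagonal hp 0 (p ^ m) 1 n
  have hterm : ∀ ij ∈ antidiagonal n,
      qSubPow p 0 (p ^ m) ij.1 / ⦅p; p⦆_ij.1 * (qSubPow p (p ^ m) 1 ij.2 / ⦅p; p⦆_ij.2)
        = (-1) ^ n * p ^ n.choose 2 * ⦅p; p⦆_m * (if ij.2 ≤ m then
          p ^ (ij.1 * (m - ij.2)) / (⦅p; p⦆_ij.1 * ⦅p; p⦆_ij.2 * ⦅p; p⦆_(m - ij.2)) else 0) := by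
    rintro ⟨i, j⟩ hij
    obtain rfl : i + j = n := mem_antidiagonal.mp hij
    dsimp only
    split_ifs with hj
    · obtain ⟨d, rfl⟩ := Nat.exists_eq_add_of_le' hj
      rw [qSubPow_zero_left, eq_div_of_mul_eq (hne d) (qSubPow_pow_add_one_mul p d j),
        Nat.add_sub_cancel, neg_pow, choose_two_add]
      have := hne i
      have := hne j
      have := hne d
      field_simp
      ring
    · rw [qSubPow_pow_one_eq_zero p (not_le.mp hj)]
      simp
  rw [sum_congr rfl hterm, ← mul_sum, qSubPow_zero_left] at hvandermonde
  refine mul_left_cancel₀ (a := (-1) ^ n * p ^ n.choose 2 * ⦅p; p⦆_m) ?_ ?_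
  · exact mul_ne_zero (mul_ne_zero (pow_ne_zero _ (by simp)) (pow_ne_zero _ hp0)) (hne m)
  · rw [← hvandermonde]
    have := hne m
    field_simp

theorem sum_antidiagonal_qChuVandermonde (hp : ¬IsOfFinOrder p) (d n : ℕ) :
    ∑ ij ∈ antidiagonal n, (-1) ^ ij.2 * p ^ (ij.2.choose 2 + (d + 1) * ij.2)
        * ⦅-p; p⦆_(n + d + ij.1) / (⦅p ^ 2; p ^ 2⦆_ij.1 * ⦅p; p⦆_ij.2)
      = ⦅p ^ 2; p ^ 2⦆_(n + d) / (⦅p; p⦆_d * ⦅p ^ 2; p ^ 2⦆_n) := by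
  have hne := qSubPow_one_self_ne_zero hp
  have hne' := qSubPow_one_neg_ne_zero hp
  have hsq (k : ℕ) : ⦅p ^ 2; p ^ 2⦆_k = ⦅p; p⦆_k * ⦅-p; p⦆_k := by
    rw [← qSubPow_sq, one_pow]
  have hsplit (a : F) (k l : ℕ) : ⦅a; p⦆_(k + l) = ⦅a; p⦆_k * ⦅a * p ^ k; p⦆_l :=
    qSubPow_add p 1 a k l
  have hterm : ∀ ij ∈ antidiagonal n,
      (-1) ^ ij.2 * p ^ (ij.2.choose 2 + (d + 1) * ij.2)
        * ⦅-p; p⦆_(n + d + ij.1) / (⦅p ^ 2; p ^ 2⦆_ij.1 * ⦅p; p⦆_ij.2)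
      = ⦅-p; p⦆_(n + d) / ⦅-p; p⦆_n * (⦅-p * p ^ (n + d); p⦆_ij.1 / ⦅p; p⦆_ij.1
        * (qSubPow p (-p * p ^ (n + d)) (p * p ^ d) ij.2 / ⦅p; p⦆_ij.2)) := by
    rintro ⟨i, j⟩ hij
    obtain rfl : i + j = n := mem_antidiagonal.mp hij
    have hreflect : qSubPow p (-p * p ^ (i + j + d)) (p * p ^ d) j
        = (-1) ^ j * p ^ (j.choose 2 + (d + 1) * j) * ⦅-p * p ^ i; p⦆_j := by
      rw [show -p * p ^ (i + j + d) = -p * p ^ (d + i) * p ^ j by ring, qSubPow_mul_pow,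
        show p * p ^ d = p ^ (d + 1) * 1 by ring,
        show -p * p ^ (d + i) * p = p ^ (d + 1) * (-p * p ^ i) by ring, qSubPow_mul_mul]
      ring
    dsimp only
    rw [hreflect, hsq, hsplit (-p) (i + j + d), hsplit (-p) i j]
    have := hne i
    have := hne j
    have := hne' i
    have := right_ne_zero_of_mul (hsplit (-p) i j ▸ hne' (i + j))
    generalize ⦅-p * p ^ i; p⦆_j = c at *
    field_simp
  rw [sum_congr rfl hterm, ← mul_sum, ← qSubPow_div_eq_sum_antidiagonal hp, hsq, hsq,
    add_comm n d, hsplit p d n]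
  have := hne d
  field_simp

end Field

theorem not_isOfFinOrder_ratFunc_X (k : Type*) [Field k] :
    ¬IsOfFinOrder (RatFunc.X : RatFunc k) := fun h => by
  obtain ⟨n, hn, hX⟩ := isOfFinOrder_iff_pow_eq_one.mp h
  exact RatFunc.transcendental_X.pow hn (hX ▸ isAlgebraic_one)

theorem not_isOfFinOrder_q_sq : ¬IsOfFinOrder (q ^ 2) := fun h =>
  not_isOfFinOrder_ratFunc_X ℚ (h.of_pow two_ne_zero)

theorem q_ne_zero : q ≠ 0 := RatFunc.X_ne_zero

theorem q2p_eq (n : ℕ) : q2p n = ⦅q ^ 2; q ^ 2⦆_n := rfl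

theorem q4p_eq (n : ℕ) : q4p n = ⦅(q ^ 2) ^ 2; (q ^ 2) ^ 2⦆_n := by
  rw [← pow_mul]
  rfl

theorem q2p_ne_zero (n : ℕ) : q2p n ≠ 0 := qSubPow_one_self_ne_zero not_isOfFinOrder_q_sq n

theorem q4p_ne_zero (n : ℕ) : q4p n ≠ 0 :=
  q4p_eq n ▸ qSubPow_one_sq_ne_zero not_isOfFinOrder_q_sq n

theorem q4p_div_q2p (n : ℕ) : q4p n / q2p n = ⦅-q ^ 2; q ^ 2⦆_n := by
  rw [div_eq_iff (q2p_ne_zero n), q4p_eq, q2p_eq, mul_comm, ← qSubPow_sq, one_pow]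

/-- The summand of `(-1)^s q^{s(4r-s+1)} Csum b 0 r s t u`, the part of `Cbc b 0 r s t u` that
consists of the triple sum together with the power of `q` and the sign in front of it. -/
def normalizedSummand (b r s t u α β γ : ℕ) : K :=
  (-1) ^ s * q ^ ((s : ℤ) * (4 * (r : ℤ) - (s : ℤ) + 1))
    * ((-1) ^ (β + γ) * q ^ phiC b r t α β γ * Xi b 0 r s t u α β γ)

section Summand

variable {b r s t u α α' β l j i A d : ℕ}

theorem normalizedExponent_eq (hr : r = j + i + d) (hs : s = r + β + (j + i))
    (hb : b + β = s + α + A) :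
    (s : ℤ) * (4 * (r : ℤ) - (s : ℤ) + 1) + phiC b r t α β (r + j)
      = (2 * ((t + 1) * α + α.choose 2 + β * A + (i.choose 2 + (d + 1) * i)) : ℕ) := by
  have htwo (k : ℕ) : (2 : ℤ) * k.choose 2 = k * (k - 1) := by
    qify
    rw [Nat.cast_choose_two]
    ring
  have hb' : (b : ℤ) = s + α + A - β := by omega
  push_cast [phiC, hb', hs, hr]
  linear_combination -htwo α - htwo i

theorem Xi_zero_eq (hr : r = j + i + d) (hs : s = r + β + (j + i)) (ht : t = β + l)
    (hu : u = t + (α + α')) (hb : b + β = s + α + A) :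
    Xi b 0 r s t u α β (r + j) = q2p (l + A) * q2p d * q4p (j + i) * ⦅-q ^ 2; q ^ 2⦆_(r + j)
        / (q2p α * q2p β * q2p α' * q2p l * q2p A * q2p i * q4p j) := by
  rw [Xi, show b + t - (s + α) = l + A by omega, show 2 * r + β - s = d by omega,
    show 0 + s - (r + β) = j + i by omega, show u - (t + α) = α' by omega,
    show t - β = l by omega, show b + β - (s + α) = A by omega,
    show s - (β + (r + j)) = i by omega, show 0 + (r + j) - r = j by omega, zero_add,
    ← q4p_div_q2p]
  ring

theorem normalizedSummand_eq (hr : r = j + i + d) (hs : s = r + β + (j + i)) (ht : t = β + l)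
    (hu : u = t + (α + α')) (hb : b + β = s + α + A) :
    normalizedSummand b r s t u α β (r + j)
      = ((q ^ 2) ^ (t + 1)) ^ α * (q ^ 2) ^ α.choose 2 / (q2p α * q2p α')
        * (q2p (l + A) * ((q ^ 2) ^ (β * A) / (q2p β * q2p l * q2p A)))
        * (q2p d * q4p (j + i) * ((-1) ^ i * (q ^ 2) ^ (i.choose 2 + (d + 1) * i)
          * ⦅-q ^ 2; q ^ 2⦆_(r + j) / (q4p j * q2p i))) := by
  have hsign : (-1 : K) ^ s * (-1) ^ (β + (r + j)) = (-1) ^ i := by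
    rw [← pow_add, show s + (β + (r + j)) = 2 * (r + β + j) + i by omega, pow_add, pow_mul]
    simp
  have hpow : q ^ ((s : ℤ) * (4 * (r : ℤ) - (s : ℤ) + 1)) * q ^ phiC b r t α β (r + j)
      = ((q ^ 2) ^ (t + 1)) ^ α * (q ^ 2) ^ α.choose 2 * (q ^ 2) ^ (β * A)
        * (q ^ 2) ^ (i.choose 2 + (d + 1) * i) := by
    rw [← zpow_add₀ q_ne_zero, normalizedExponent_eq hr hs hb, zpow_natCast]
    ring
  rw [normalizedSummand, Xi_zero_eq hr hs ht hu hb, ← mul_assoc, mul_mul_mul_comm, hsign, hpow]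
  ring

theorem sum_gamma_normalizedSummand {N : ℕ} (hr : r = N + d) (hs : s = r + β + N)
    (ht : t = β + l) (hu : u = t + (α + α')) (hb : b + β = s + α + A) :
    ∑ ji ∈ antidiagonal N, normalizedSummand b r s t u α β (r + ji.1)
      = ((q ^ 2) ^ (t + 1)) ^ α * (q ^ 2) ^ α.choose 2 / (q2p α * q2p α')
        * (q2p (l + A) * ((q ^ 2) ^ (β * A) / (q2p β * q2p l * q2p A))) * q4p r := by
  have hγ := sum_antidiagonal_qChuVandermonde not_isOfFinOrder_q_sq d N
  simp only [← q2p_eq, ← q4p_eq, ← hr] at hγ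
  rw [eq_div_iff (mul_ne_zero (q2p_ne_zero d) (q4p_ne_zero N)), mul_comm] at hγ
  rw [← hγ, mul_sum, mul_sum]
  refine sum_congr rfl fun ji hji => ?_
  obtain rfl := mem_antidiagonal.mp hji
  exact normalizedSummand_eq hr hs ht hu hb

theorem sum_beta_gamma_normalizedSummand (hsr : s ≤ 2 * r) (hsu : s + u ≤ b + 2 * t)
    (hrt : r + t ≤ s) (hu : u = t + (α + α')) :
    ∑ βl ∈ antidiagonal t, (if s + α ≤ b + βl.1 then
        ∑ ji ∈ antidiagonal (s - (r + βl.1)), normalizedSummand b r s t u α βl.1 (r + ji.1) else 0)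
      = ((q ^ 2) ^ (t + 1)) ^ α * (q ^ 2) ^ α.choose 2 / (q2p α * q2p α') * (q4p r / q2p t) := by
  set M := b + t - (s + α)
  have hβ := sum_antidiagonal_durfee (pow_ne_zero 2 q_ne_zero) not_isOfFinOrder_q_sq M t
  simp only [← q2p_eq] at hβ
  rw [mul_comm (q2p M), ← div_div, eq_div_iff (q2p_ne_zero M), mul_comm] at hβ
  rw [← mul_one_div (q4p r), ← hβ, mul_sum, mul_sum, mul_sum]
  refine sum_congr rfl fun βl hmem => ?_
  have hβl := mem_antidiagonal.mp hmem
  by_cases hA : s + α ≤ b + βl.1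
  · rw [if_pos hA, if_pos (by omega), sum_gamma_normalizedSummand (A := M - βl.2)
      (d := 2 * r + βl.1 - s) (l := βl.2) (by omega) (by omega) hβl.symm hu (by omega),
      Nat.add_sub_cancel' (by omega)]
    ring
  · rw [if_neg hA, if_neg (by omega), mul_zero, mul_zero, mul_zero]

end Summand

section Csum

variable {b r s t u : ℕ}

theorem sign_mul_zpow_mul_Csum_zero_eq_sum (htu : t ≤ u) (hrt : r + t ≤ s) :
    (-1 : K) ^ s * q ^ ((s : ℤ) * (4 * (r : ℤ) - (s : ℤ) + 1)) * Csum b 0 r s t u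
      = ∑ αα' ∈ antidiagonal (u - t), ∑ βl ∈ antidiagonal t,
          if s + αα'.1 ≤ b + βl.1 then ∑ ji ∈ antidiagonal (s - (r + βl.1)),
            normalizedSummand b r s t u αα'.1 βl.1 (r + ji.1) else 0 := by
  simp only [Nat.sum_antidiagonal_eq_sum_range_succ_mk]
  rw [Csum, mul_sum, sum_filter, sum_product]
  refine sum_congr rfl fun α hα => ?_
  rw [sum_product]
  refine sum_congr rfl fun β hβ => ?_
  rw [mem_range] at hα hβ
  split_ifs with hA
  · have hrange : (s - (r + β)).succ = s + 1 - β - r := by omega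
    rw [hrange, ← sum_Ico_eq_sum_range, ← sum_filter]
    refine sum_congr ?_ fun _ _ => rfl
    ext γ
    simp only [mem_filter, mem_range, mem_Ico]
    omega
  · refine sum_eq_zero fun γ _ => if_neg ?_
    dsimp only
    omega

theorem sign_mul_zpow_mul_Csum_zero (htu : t ≤ u) (hsr : s ≤ 2 * r) (hsu : s + u ≤ b + 2 * t)
    (hrt : r + t ≤ s) :
    (-1 : K) ^ s * q ^ ((s : ℤ) * (4 * (r : ℤ) - (s : ℤ) + 1)) * Csum b 0 r s t u
      = q4p r * q4p u / (q2p u * q4p t * q2p (u - t)) := by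
  have hα := sum_antidiagonal_qBinomial not_isOfFinOrder_q_sq ((q ^ 2) ^ (t + 1)) (u - t)
  have hsplit : ⦅-q ^ 2; q ^ 2⦆_u = ⦅-q ^ 2; q ^ 2⦆_t * ⦅-(q ^ 2) ^ (t + 1); q ^ 2⦆_(u - t) := by
    rw [pow_succ' (q ^ 2) t, ← neg_mul, ← qSubPow_add, Nat.add_sub_cancel' htu]
  simp only [← q2p_eq] at hα
  rw [sign_mul_zpow_mul_Csum_zero_eq_sum htu hrt, sum_congr rfl fun αα' hαα' =>
    sum_beta_gamma_normalizedSummand hsr hsu hrt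
      (by rw [mem_antidiagonal.mp hαα', Nat.add_sub_cancel' htu]), ← sum_mul, hα]
  rw [← q4p_div_q2p u, ← q4p_div_q2p t] at hsplit
  have := q2p_ne_zero u
  have := q2p_ne_zero t
  have := q4p_ne_zero t
  have := q2p_ne_zero (u - t)
  generalize ⦅-(q ^ 2) ^ (t + 1); q ^ 2⦆_(u - t) = x at *
  field_simp at hsplit ⊢
  linear_combination -q4p r * hsplit

end Csum

/-- closed product form of `C^{b,0}_{r,s,t,u}` for `(r,s,t,u) ∈ S_{b,0}`. -/
theorem Cb0_closed (b r s t u : ℕ) (h1 : t ≤ u) (h2 : s ≤ 2 * r)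
    (h3 : s + u ≤ b + 2 * t) (h4 : r + t ≤ s) :
    Cbc b 0 r s t u =
      (q2p b / (q2p u * q2p (b + 2 * t - (s + u)) * q2p (2 * r - s)))
        * (q4p u / (q4p t * q4p (u - t) * q4p (s - (r + t)))) := by
  simp only [Cbc, zero_add]
  rw [sign_mul_zpow_mul_Csum_zero h1 h2 h3 h4]
  have := q2p_ne_zero (u - t)
  have := q4p_ne_zero r
  field_simp
end
end

section
/- For every integer b ≥ 0, the polynomial P_b is symmetric under the exchange of its first and third variables: the image of P_b under the K-algebra automorphism of K[x,y,z] swapping x and z (and fixing y) equals P_b; that is, P_b(x,y,z) = P_b(z,y,x). -/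
noncomputable section

open MvPolynomial

/-- The polynomial ring `K[x,y,z]`. -/
abbrev P3 : Type := MvPolynomial (Fin 3) K

/-- The polynomials `P_b(x,y,z)`, defined by `P_0 = 1` and
`P_{b+1}(x,y,z) = (1−z)·P_b(x,y,q^{−2}z) − q^{−2b}·x·(1 − q^{−2b}·y·z)·P_b(x,y,z)`. -/
def P : ℕ → P3
  | 0 => 1
  | b + 1 =>
      (1 - X 2) * (aeval ![(X 0 : P3), X 1, C (q ^ (-2 : ℤ)) * X 2] (P b))
    - C (q ^ (-2 * (b : ℤ))) * X 0 * (1 - C (q ^ (-2 * (b : ℤ))) * X 1 * X 2) * P b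

/-!
Write `t = q⁻²` and let `T_x`, `T_z` scale one variable by `t`. Exchanging `x` and `z` in the
recursion for `P_{b+1}` gives a mirrored recursion through `T_x`, and the two right-hand sides
agree exactly when `(1 - x) T_x P_b = (1 - z) T_z P_b - t ^ b (x - z) P_b`. This identity
propagates along the original recursion because `T_x` and `T_z` commute, so `P_b` satisfies both
recursions; as they are exchanged by the swap of `x` and `z`, `P_b` is symmetric.
-/

section Dilate

variable {σ τ R : Type*} [CommSemiring R]

/-- The dilation `X i ↦ c i X i` of the variables: for a family `c` equal to `q⁻²` at one index and
to `1` elsewhere, it is the `q`-shift operator in that variable. -/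
def dilate (c : σ → R) : MvPolynomial σ R →ₐ[R] MvPolynomial σ R :=
  aeval fun i => C (c i) * X i

lemma dilate_X (c : σ → R) (i : σ) : dilate c (X i) = C (c i) * X i :=
  aeval_X _ i

lemma dilate_C (c : σ → R) (r : R) : dilate c (C r) = C r :=
  algHom_C (dilate c) r

lemma dilate_comm (c d : σ → R) (f : MvPolynomial σ R) :
    dilate c (dilate d f) = dilate d (dilate c f) := by
  suffices h : (dilate c).comp (dilate d) = (dilate d).comp (dilate c) from
    DFunLike.congr_fun h f
  ext1 i
  simp only [AlgHom.comp_apply, map_mul, dilate_X, dilate_C, mul_left_comm]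

lemma rename_dilate_comp (e : σ → τ) (c : τ → R) (f : MvPolynomial σ R) :
    rename e (dilate (c ∘ e) f) = dilate c (rename e f) := by
  suffices h : (rename e).comp (dilate (c ∘ e)) = (dilate c).comp (rename e) from
    DFunLike.congr_fun h f
  ext1 i
  simp only [AlgHom.comp_apply, map_mul, dilate_X, rename_C, rename_X, Function.comp_apply]

lemma rename_swap_dilate (t : R) (f : MvPolynomial (Fin 3) R) :
    rename (Equiv.swap 0 2) (dilate ![t, 1, 1] f) =
      dilate ![1, 1, t] (rename (Equiv.swap 0 2) f) := by
  have h : ![t, 1, 1] = ![1, 1, t] ∘ Equiv.swap 0 2 := by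
    ext i
    fin_cases i <;> rfl
  rw [h, rename_dilate_comp]

lemma aeval_scale_eq_dilate (t : R) :
    aeval ![(X 0 : MvPolynomial (Fin 3) R), X 1, C t * X 2] = dilate ![1, 1, t] := by
  ext1 i
  fin_cases i <;> simp [dilate_X]

lemma aeval_swap_eq_rename :
    aeval ![(X 2 : MvPolynomial (Fin 3) R), X 1, X 0] = rename (Equiv.swap 0 2) := by
  ext1 i
  fin_cases i <;> simp [Equiv.swap_apply_of_ne_of_ne]

end Dilate

section RecPoly

variable {R : Type*} [CommRing R] (t : R)

/-- The polynomials `P_b` over a commutative ring, with an arbitrary scalar `t` in place of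
`q⁻²`. -/
def recPoly : ℕ → MvPolynomial (Fin 3) R
  | 0 => 1
  | b + 1 => (1 - X 2) * dilate ![1, 1, t] (recPoly b)
      - C t ^ b * X 0 * (1 - C t ^ b * X 1 * X 2) * recPoly b

lemma recPoly_zero : recPoly t 0 = 1 := rfl

lemma recPoly_succ (b : ℕ) : recPoly t (b + 1) =
    (1 - X 2) * dilate ![1, 1, t] (recPoly t b)
      - C t ^ b * X 0 * (1 - C t ^ b * X 1 * X 2) * recPoly t b := rfl

lemma dilate_recPoly_succ (c : Fin 3 → R) (b : ℕ) : dilate c (recPoly t (b + 1)) =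
    (1 - C (c 2) * X 2) * dilate ![1, 1, t] (dilate c (recPoly t b))
      - C t ^ b * (C (c 0) * X 0) * (1 - C t ^ b * (C (c 1) * X 1) * (C (c 2) * X 2))
        * dilate c (recPoly t b) := by
  simp only [recPoly_succ, map_sub, map_mul, map_pow, map_one, dilate_X, dilate_C,
    dilate_comm c ![1, 1, t]]

lemma one_sub_X_zero_mul_dilate_recPoly (b : ℕ) :
    (1 - X 0) * dilate ![t, 1, 1] (recPoly t b) =
      (1 - X 2) * dilate ![1, 1, t] (recPoly t b) - C t ^ b * (X 0 - X 2) * recPoly t b := by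
  induction b with
  | zero =>
    simp only [recPoly_zero, map_one]
    ring
  | succ b ih =>
    have ih_dilated : (1 - X 0) * dilate ![1, 1, t] (dilate ![t, 1, 1] (recPoly t b)) =
        (1 - C t * X 2) * dilate ![1, 1, t] (dilate ![1, 1, t] (recPoly t b))
          - C t ^ b * (X 0 - C t * X 2) * dilate ![1, 1, t] (recPoly t b) := by
      simpa [dilate_X, dilate_C] using congrArg (dilate ![1, 1, t]) ih
    have dilate_x := dilate_recPoly_succ t ![t, 1, 1] b
    have dilate_z := dilate_recPoly_succ t ![1, 1, t] b
    simp only [Matrix.cons_val, C_1, one_mul] at dilate_x dilate_z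
    rw [dilate_x, dilate_z, recPoly_succ]
    -- `T_x P_{b+1}` is a combination of `T_z T_x P_b` and `T_x P_b`; eliminate `T_x` from both.
    linear_combination (1 - X 2) * ih_dilated
      - C t * (C t ^ b * X 0 * (1 - C t ^ b * X 1 * X 2)) * ih

lemma recPoly_succ_mirror (b : ℕ) : recPoly t (b + 1) =
    (1 - X 0) * dilate ![t, 1, 1] (recPoly t b)
      - C t ^ b * X 2 * (1 - C t ^ b * X 1 * X 0) * recPoly t b := by
  rw [recPoly_succ, one_sub_X_zero_mul_dilate_recPoly]
  ring

theorem P_symm_general (b : ℕ) :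
    aeval ![(X 2 : MvPolynomial (Fin 3) R), X 1, X 0] (recPoly t b) = recPoly t b := by
  rw [aeval_swap_eq_rename]
  induction b with
  | zero => rw [recPoly_zero, map_one]
  | succ b ih =>
    have swap_one : Equiv.swap (0 : Fin 3) 2 1 = 1 := by decide
    calc rename (Equiv.swap 0 2) (recPoly t (b + 1))
      _ = (1 - X 2) * dilate ![1, 1, t] (rename (Equiv.swap 0 2) (recPoly t b))
          - C t ^ b * X 0 * (1 - C t ^ b * X 1 * X 2)
            * rename (Equiv.swap 0 2) (recPoly t b) := by
        simp only [recPoly_succ_mirror, map_sub, map_mul, map_pow, map_one, rename_C, rename_X,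
          rename_swap_dilate, Equiv.swap_apply_left, Equiv.swap_apply_right, swap_one]
      _ = recPoly t (b + 1) := by rw [ih, recPoly_succ]

end RecPoly

lemma P_eq_recPoly (b : ℕ) : P b = recPoly (q ^ (-2 : ℤ)) b := by
  induction b with
  | zero => rfl
  | succ b ih =>
    rw [P, recPoly_succ, aeval_scale_eq_dilate, zpow_mul, zpow_natCast, C_pow, ih]

/-- `P_b(x,y,z) = P_b(z,y,x)`. -/
theorem P_symm (b : ℕ) : aeval ![(X 2 : P3), X 1, X 0] (P b) = P b := by
  rw [P_eq_recPoly, P_symm_general]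
end
end

section
/- For every integer b ≥ 0, the polynomial P_{b+1} also satisfies the Bazhanov–Sergeev recursion P_{b+1}(x,y,z) = (1−x)·(1−z)·P_b(q^{−2}x,y,q^{−2}z) − q^{−2b}·x·z·(1−y)·P_b(x,q^{−2}y,z). -/
noncomputable section

open MvPolynomial

/-!
All substitutions involved rescale variables, so they commute with each other. By induction,
expand `P_{b+2}` with the defining recursion and then `P_{b+1}` with the Bazhanov–Sergeev one; on
the other side expand the rescaled copies of `P_{b+1}` with the defining recursion. Both sides are
then combinations of four rescaled copies of `P_b` (rescale either `x, z` or `y`, then possibly `z`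
once more), and the coefficients agree. Only powers of `t = q⁻²` enter, so `t` may be any element of
a commutative ring.
-/

section ScaleVars

variable {σ R : Type*} [CommSemiring R]

/-- The substitution `X i ↦ c i • X i` in a polynomial ring, the analogue for polynomials of
`MvPowerSeries.rescale`. -/
def scaleVars (c : σ → R) : MvPolynomial σ R →ₐ[R] MvPolynomial σ R :=
  aeval fun i => C (c i) * X i

@[simp]
lemma scaleVars_X (c : σ → R) (i : σ) : scaleVars c (X i) = C (c i) * X i :=
  aeval_X _ i

@[simp]
lemma scaleVars_C (c : σ → R) (r : R) : scaleVars c (C r) = C r :=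
  (scaleVars c).commutes r

lemma scaleVars_comm (c d : σ → R) (p : MvPolynomial σ R) :
    scaleVars c (scaleVars d p) = scaleVars d (scaleVars c p) := by
  have comp_comm : (scaleVars c).comp (scaleVars d) = (scaleVars d).comp (scaleVars c) := by
    ext1 i
    simp only [AlgHom.comp_apply, map_mul, scaleVars_C, scaleVars_X, mul_left_comm]
  exact DFunLike.congr_fun comp_comm p

lemma scaleVars_fin_three (u v w : R) :
    scaleVars ![u, v, w] = aeval ![C u * X 0, C v * X 1, C w * X 2] := by
  ext1 i
  fin_cases i <;> simp

end ScaleVars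

section BazhanovSergeev

variable {R : Type*} [CommRing R]

/-- The polynomials `P_b` over an arbitrary commutative ring, with a parameter `t` in place of
`q⁻²`. -/
def bsPoly (t : R) : ℕ → MvPolynomial (Fin 3) R
  | 0 => 1
  | b + 1 =>
      (1 - X 2) * scaleVars ![1, 1, t] (bsPoly t b)
        - C (t ^ b) * X 0 * (1 - C (t ^ b) * X 1 * X 2) * bsPoly t b

lemma bsPoly_zero (t : R) : bsPoly t 0 = 1 := rfl

lemma bsPoly_succ (t : R) (b : ℕ) :
    bsPoly t (b + 1) =
      (1 - X 2) * scaleVars ![1, 1, t] (bsPoly t b)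
        - C (t ^ b) * X 0 * (1 - C (t ^ b) * X 1 * X 2) * bsPoly t b := rfl

lemma scaleVars_bsPoly_succ (t u v w : R) (b : ℕ) :
    scaleVars ![u, v, w] (bsPoly t (b + 1)) =
      (1 - C w * X 2) * scaleVars ![1, 1, t] (scaleVars ![u, v, w] (bsPoly t b))
        - C (t ^ b) * (C u * X 0) * (1 - C (t ^ b) * (C v * X 1) * (C w * X 2))
          * scaleVars ![u, v, w] (bsPoly t b) := by
  simp [bsPoly_succ, scaleVars_comm ![u, v, w]]

theorem P_BS_general (t : R) (b : ℕ) :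
    bsPoly t (b + 1) =
      (1 - X 0) * (1 - X 2) * scaleVars ![t, 1, t] (bsPoly t b)
        - C (t ^ b) * X 0 * X 2 * (1 - X 1) * scaleVars ![1, t, 1] (bsPoly t b) := by
  induction b with
  | zero =>
    simp only [bsPoly_succ, bsPoly_zero, pow_zero, map_one]
    ring
  | succ b ih =>
    have scale_z : scaleVars ![1, 1, t] (bsPoly t (b + 1)) =
        (1 - X 0) * (1 - C t * X 2)
            * scaleVars ![1, 1, t] (scaleVars ![t, 1, t] (bsPoly t b))
          - C (t ^ b) * X 0 * (C t * X 2) * (1 - X 1)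
            * scaleVars ![1, 1, t] (scaleVars ![1, t, 1] (bsPoly t b)) := by
      simp [ih]
    rw [bsPoly_succ t (b + 1), scale_z, scaleVars_bsPoly_succ, scaleVars_bsPoly_succ, ih]
    simp only [pow_succ, map_mul, map_one]
    ring

end BazhanovSergeev

lemma P_eq_bsPoly (b : ℕ) : P b = bsPoly (q ^ (-2 : ℤ)) b := by
  induction b with
  | zero => rfl
  | succ b ih =>
    simp only [P, bsPoly_succ, scaleVars_fin_three, ih, zpow_mul, zpow_natCast, map_one, one_mul]

/-- the Bazhanov–Sergeev recursion
`P_{b+1}(x,y,z) = (1−x)(1−z)·P_b(q^{−2}x,y,q^{−2}z) − q^{−2b}·x·z·(1−y)·P_b(x,q^{−2}y,z)`. -/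
theorem P_BS (b : ℕ) :
    P (b + 1) =
      (1 - X 0) * (1 - X 2)
          * aeval ![C (q ^ (-2 : ℤ)) * (X 0 : P3), X 1, C (q ^ (-2 : ℤ)) * X 2] (P b)
      - C (q ^ (-2 * (b : ℤ))) * X 0 * X 2 * (1 - X 1)
          * aeval ![(X 0 : P3), C (q ^ (-2 : ℤ)) * X 1, X 2] (P b) := by
  simpa only [P_eq_bsPoly, scaleVars_fin_three, zpow_mul, zpow_natCast, map_one, one_mul]
    using P_BS_general (q ^ (-2 : ℤ)) b
end
end
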